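/- Let N be a nonempty finite set, (K,V) a finite simplicial complex, f : K → PN a subdivision, and c a Sperner coloring of f. Then there exists a face σ ∈ K with c(σ) = N (a face using all colors); this is Sperner's lemma, the case |I| = 1 of the main theorem. -/

import Mathlib

open scoped Classical

/-- A finite simplicial complex on the vertex set `V`: a collection of finite subsets of `V`
(faces) closed under taking subsets. -/
def IsComplex {V : Type*} (K : Finset (Finset V)) : Prop :=
  ∀ A ∈ K, ∀ B, B ⊆ A → B ∈ K

/-- The support of `k : V → ℝ`, i.e. `{v : k v > 0}`. -/
noncomputable def spt {V : Type*} [Fintype V] (k : V → ℝ) : Finset V :=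
  Finset.univ.filter (fun v => 0 < k v)

/-- The geometric realization of a complex `K` as a subspace of `ℝ^V`. -/
def realization {V : Type*} [Fintype V] (K : Finset (Finset V)) : Set (V → ℝ) :=
  {k | (∀ v, 0 ≤ k v) ∧ ∑ v, k v = 1 ∧ spt k ∈ K}

/-- `f` is an order preserving map from `K` to `K'`:
`A ⊆ B ∈ K` implies `f A ⊆ f B ∈ K'`. -/
def IsOrderPreserving {V V' : Type*} (K : Finset (Finset V)) (K' : Finset (Finset V'))
    (f : Finset V → Finset V') : Prop :=
  ∀ A B, B ∈ K → A ⊆ B → f A ⊆ f B ∧ f B ∈ K'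

/-- `f` is a subdivision: an order preserving map `K → K'` for which there is a homeomorphism
`h : |K| → |K'|` with `spt (h k) = f (spt k)` for all `k ∈ |K|`. -/
def IsSubdivision {V V' : Type*} [Fintype V] [Fintype V'] (K : Finset (Finset V))
    (K' : Finset (Finset V')) (f : Finset V → Finset V') : Prop :=
  IsOrderPreserving K K' f ∧
  ∃ h : realization K ≃ₜ realization K',
    ∀ k : realization K, spt ((h k : V' → ℝ)) = f (spt (k : V → ℝ))

/-- A Sperner coloring of a subdivision `f : K → K'`: a simplicial map `c : K → K'`
(induced by a vertex map) with `c A ⊆ f A` for every face `A ∈ K`. -/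
def IsSpernerColoring {V V' : Type*} [DecidableEq V'] (K : Finset (Finset V))
    (K' : Finset (Finset V')) (f : Finset V → Finset V')
    (c : Finset V → Finset V') : Prop :=
  (∃ c₀ : V → V', ∀ A : Finset V, c A = A.image c₀) ∧
  (∀ A ∈ K, c A ∈ K') ∧ (∀ A ∈ K, c A ⊆ f A)

/-!
The homeomorphism of the subdivision goes from `|PN|` to `|K|`; following it by the affine
extension `|K| → |PN|` of the coloring gives a continuous self-map of the simplex that preserves
every face. Such a map is surjective, and a point that it sends to the barycenter lies in the image
of the interior of a face of `K` using all colors.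

If `g` preserves faces and `y` is any point, the closed sets `{x | g x i ≤ y i}` cover the simplex,
and the `i`-th one contains the facet `x i = 0`. By a dual form of the
Knaster–Kuratowski–Mazurkiewicz theorem they have a common point, which `g` must send to `y`.

That theorem comes, by compactness, from finite nets colored by the sets of the cover, and here
Scarf's lemma replaces the usual triangulations: order the net by each of its coordinates, adjoin
slack elements for the facets, and walk through sets that no element beats in all orders at once.
-/

open Finset

section DoubleCounting

theorem sum_card_insert_mem_eq_sum_card_erase_mem {R : Type*} [Fintype R]
    (D S : Finset (Finset R)) :
    ∑ τ ∈ D, #{x | x ∉ τ ∧ insert x τ ∈ S} = ∑ σ ∈ S, #{x ∈ σ | σ.erase x ∈ D} := by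
  rw [← card_sigma, ← card_sigma]
  refine card_nbij' (fun p ↦ ⟨insert p.2 p.1, p.2⟩) (fun p ↦ ⟨p.1.erase p.2, p.2⟩) ?_ ?_ ?_ ?_
  all_goals rintro ⟨ρ, x⟩; simp +contextual

/-- If `σ` misses a color, then its image under `c` omits only `i₀` whenever one of the counted
facets exists, so exactly two points of `σ` share a color and these are the points counted. -/
theorem even_card_filter_image_erase {I R : Type*} [Fintype I] {c : R → I} {σ : Finset R}
    (hcard : #σ = Fintype.card I) (hc : σ.image c ≠ univ) (i₀ : I) :
    Even #{x ∈ σ | (σ.erase x).image c = univ.erase i₀} := by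
  rcases eq_empty_or_nonempty {x ∈ σ | (σ.erase x).image c = univ.erase i₀} with h | ⟨x, hx⟩
  · simp [h]
  obtain ⟨hxσ, hx⟩ := mem_filter.1 hx
  have hinj : Set.InjOn c (σ.erase x) := by
    rw [← card_image_iff, hx, card_erase_of_mem (mem_univ _), card_erase_of_mem hxσ, hcard,
      card_univ]
  have himage : σ.image c = univ.erase i₀ := by
    rw [← insert_erase hxσ, image_insert, hx, insert_eq_self, mem_erase]
    refine ⟨fun hcx ↦ hc ?_, mem_univ _⟩
    rw [← insert_erase hxσ, image_insert, hx, hcx, insert_erase (mem_univ _)]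
  obtain ⟨x', hx', hcx'⟩ : ∃ x' ∈ σ.erase x, c x' = c x := by
    rw [← mem_image, hx, ← himage]
    exact mem_image_of_mem c hxσ
  have himage_erase : ∀ z ∈ σ,
      (σ.erase z).image c = univ.erase i₀ ↔ ∃ w ∈ σ.erase z, c w = c z := by
    intro z hz
    rw [← himage, ← mem_image, ← insert_eq_self, ← image_insert, insert_erase hz, eq_comm]
  have hpair : {z ∈ σ | (σ.erase z).image c = univ.erase i₀} = {x, x'} := by
    ext z
    have hinj' : ∀ a ∈ σ.erase x, ∀ b ∈ σ.erase x, c a = c b → a = b := fun a ha b hb ↦ hinj ha hb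
    simp only [mem_filter, mem_insert, mem_singleton]
    grind
  rw [hpair, card_pair (ne_of_mem_erase hx').symm]
  exact even_two

end DoubleCounting

section Dominating

variable {I R α : Type*} [LinearOrder α] {u : I → R → α} {σ τ : Finset R} {m : I → R} {k : I}
  {x y : R}

/-- Scarf's dominating sets: the functions `u i` order `R` in several ways, and no `y` lies strictly
above the minimum of `σ` in all of these orders at once. -/
def IsDominating (u : I → R → α) (σ : Finset R) : Prop :=
  ∀ y, ∃ i, ∀ x ∈ σ, u i y ≤ u i x

theorem IsDominating.mono (hτσ : τ ⊆ σ) (hσ : IsDominating u σ) : IsDominating u τ :=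
  fun y ↦ (hσ y).imp fun _ hi x hx ↦ hi x (hτσ hx)

/-- `m` selects, for each of the orders `u i`, a least element of `σ`. -/
def IsArgmin (u : I → R → α) (σ : Finset R) (m : I → R) : Prop :=
  ∀ i, m i ∈ σ ∧ ∀ x ∈ σ, u i (m i) ≤ u i x

theorem exists_isArgmin (u : I → R → α) (hσ : σ.Nonempty) : ∃ m, IsArgmin u σ m := by
  choose m hm using fun i ↦ σ.exists_min_image (u i) hσ
  exact ⟨m, hm⟩

theorem IsArgmin.exists_eq (hu : ∀ i, (u i).Injective) (hm : IsArgmin u σ m)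
    (hσ : IsDominating u σ) (hx : x ∈ σ) : ∃ i, m i = x := by
  obtain ⟨i, hi⟩ := hσ x
  exact ⟨i, hu i (((hm i).2 x hx).antisymm (hi _ (hm i).1))⟩

theorem IsArgmin.image_univ [Fintype I] (hu : ∀ i, (u i).Injective) (hm : IsArgmin u σ m)
    (hσ : IsDominating u σ) : univ.image m = σ := by
  ext x
  simp only [mem_image, mem_univ, true_and]
  exact ⟨fun ⟨i, hi⟩ ↦ hi ▸ (hm i).1, hm.exists_eq hu hσ⟩

/-- The elements above every minimum `m l` with `l ≠ k`: those which may take over the role of the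
`k`-th minimum. -/
def replacements (u : I → R → α) (m : I → R) (k : I) : Set R :=
  {y | ∀ l ≠ k, u l (m l) < u l y}

/-- The best replacement of the `k`-th minimum, as in a pivot step of the simplex algorithm. -/
def IsPivot (u : I → R → α) (m : I → R) (k : I) (x : R) : Prop :=
  x ∈ replacements u m k ∧ ∀ y ∈ replacements u m k, u k y ≤ u k x

theorem IsPivot.eq (hu : ∀ i, (u i).Injective) (hx : IsPivot u m k x) (hy : IsPivot u m k y) :
    x = y :=
  hu k ((hy.2 x hx.1).antisymm (hx.2 y hy.1))

theorem exists_isPivot [Finite R] (h : (replacements u m k).Nonempty) : ∃ x, IsPivot u m k x :=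
  Set.exists_max_image _ (u k) (Set.toFinite _) h

theorem IsDominating.le_of_mem_replacements (hτ : IsDominating u τ) (hm : IsArgmin u τ m)
    (hx : x ∈ replacements u m k) : ∀ z ∈ τ, u k x ≤ u k z := by
  obtain ⟨i, hi⟩ := hτ x
  obtain rfl : i = k := by_contra fun hik ↦ (hx i hik).not_ge (hi _ (hm i).1)
  exact hi

theorem IsPivot.notMem (hu : ∀ i, (u i).Injective) (hτ : IsDominating u τ) (hm : IsArgmin u τ m)
    {k' : I} (hk : k ≠ k') (hmk : m k = m k') (hx : IsPivot u m k x) : x ∉ τ := by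
  intro hxτ
  obtain ⟨i, rfl⟩ := hm.exists_eq hu hτ hxτ
  by_cases hik : i = k
  · subst hik
    exact (hx.1 k' hk.symm).ne (by rw [hmk])
  · exact (hx.1 i hik).false

theorem IsPivot.isDominating_insert (hτ : IsDominating u τ) (hm : IsArgmin u τ m)
    (hx : IsPivot u m k x) : IsDominating u (insert x τ) := by
  intro y
  by_cases hy : y ∈ replacements u m k
  · refine ⟨k, (forall_mem_insert _ _ _).2 ⟨hx.2 y hy, fun z hz ↦ (hx.2 y hy).trans ?_⟩⟩
    exact hτ.le_of_mem_replacements hm hx.1 z hz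
  · obtain ⟨l, hl, hly⟩ : ∃ l ≠ k, u l y ≤ u l (m l) := by simpa [replacements] using hy
    exact ⟨l, (forall_mem_insert _ _ _).2
      ⟨hly.trans (hx.1 l hl).le, fun z hz ↦ hly.trans ((hm l).2 z hz)⟩⟩

/-- The minima of `insert x τ` are distinct by cardinality, so `x` is the minimum in exactly one
order `k` and the other minima are those of `τ`. -/
theorem IsDominating.exists_isPivot_of_insert [Fintype I] (hu : ∀ i, (u i).Injective)
    (hcard : #τ + 1 = Fintype.card I) (hm : IsArgmin u τ m) (hx : x ∉ τ)
    (hdom : IsDominating u (insert x τ)) : ∃ k, IsPivot u m k x ∧ Set.InjOn m {k}ᶜ := by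
  obtain ⟨m', hm'⟩ := exists_isArgmin u (insert_nonempty x τ)
  have hinj : m'.Injective := by
    rw [← Set.injOn_univ, ← coe_univ, ← card_image_iff, hm'.image_univ hu hdom,
      card_insert_of_notMem hx, hcard, card_univ]
  obtain ⟨k, rfl⟩ := hm'.exists_eq hu hdom (mem_insert_self x τ)
  have hmm' : ∀ l ≠ k, m l = m' l := fun l hl ↦ by
    have hl' : m' l ∈ τ := (mem_insert.1 (hm' l).1).resolve_left (hinj.ne hl)
    exact hu l (((hm l).2 _ hl').antisymm ((hm' l).2 _ (mem_insert_of_mem (hm l).1)))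
  refine ⟨k, ⟨fun l hl ↦ ?_, fun y hy ↦ ?_⟩, fun a ha b hb hab ↦ hinj ?_⟩
  · rw [hmm' l hl]
    exact ((hm' l).2 _ (mem_insert_self _ _)).lt_of_ne ((hu l).ne (hinj.ne hl))
  · obtain ⟨i, hi⟩ := hdom y
    obtain rfl : i = k :=
      by_contra fun hik ↦ (hy i hik).not_ge (hi _ (mem_insert_of_mem (hm i).1))
    exact hi _ (mem_insert_self _ _)
  · rw [← hmm' a ha, ← hmm' b hb, hab]

/-- The elements that extend `τ` to a dominating set with one more element. -/
noncomputable def completions [Fintype R] (u : I → R → α) (τ : Finset R) : Finset R :=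
  {x | x ∉ τ ∧ IsDominating u (insert x τ)}

theorem card_completions_eq_two [Fintype I] [Fintype R] (hu : ∀ i, (u i).Injective)
    (hcard : #τ + 1 = Fintype.card I) (hτ : IsDominating u τ) (hm : IsArgmin u τ m)
    (hrepl : ∀ k, (replacements u m k).Nonempty) : #(completions u τ) = 2 := by
  obtain ⟨p, -, q, -, hpq, hmpq⟩ := exists_ne_map_eq_of_card_lt_of_maps_to (s := univ) (t := τ)
    (by rw [card_univ]; omega) (fun i _ ↦ (hm i).1)
  obtain ⟨x, hx⟩ := exists_isPivot (hrepl p)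
  obtain ⟨y, hy⟩ := exists_isPivot (hrepl q)
  have hxy : x ≠ y := by
    rintro rfl
    exact (hx.1 q hpq.symm).not_ge (hτ.le_of_mem_replacements hm hy.1 _ (hm q).1)
  refine card_eq_two.2 ⟨x, y, hxy, ?_⟩
  ext z
  simp only [completions, mem_filter_univ, mem_insert, mem_singleton]
  constructor
  · rintro ⟨hzτ, hz⟩
    obtain ⟨k, hk, hinj⟩ := hz.exists_isPivot_of_insert hu hcard hm hzτ
    have hpqk : p = k ∨ q = k := by
      by_contra! h
      exact hpq (hinj h.1 h.2 hmpq)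
    rcases hpqk with rfl | rfl
    · exact .inl (hk.eq hu hx)
    · exact .inr (hk.eq hu hy)
  · rintro (rfl | rfl)
    · exact ⟨hx.notMem hu hτ hm hpq hmpq, hx.isDominating_insert hτ hm⟩
    · exact ⟨hy.notMem hu hτ hm hpq.symm hmpq.symm, hy.isDominating_insert hτ hm⟩

/-- Scarf's slack elements, which play the role of the vertices of a large simplex around `R`:
`s i` is the worst element for `u i` and beats all non-slack elements for the other orders. -/
structure IsSlack (u : I → R → α) (s : I → R) : Prop where
  le : ∀ i y, u i (s i) ≤ u i y
  lt : ∀ i j, i ≠ j → ∀ y ∉ Set.range s, u i y < u i (s j)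

variable {s : I → R}

theorem IsSlack.mem_replacements (hs : IsSlack u s) (hm : IsArgmin u τ m) {t : R} (ht : t ∈ τ)
    (hts : t ∉ Set.range s) (k : I) : s k ∈ replacements u m k :=
  fun l hl ↦ ((hm l).2 t ht).trans_lt (hs.lt l k hl t hts)

theorem IsSlack.isDominating_facet [Fintype I] (hs : IsSlack u s) (i₀ : I) :
    IsDominating u ((univ.erase i₀).image s) := by
  intro y
  by_cases hy : y ∈ Set.range s
  · obtain ⟨j, rfl⟩ := hy
    exact ⟨j, fun x _ ↦ hs.le j x⟩
  · refine ⟨i₀, forall_mem_image.2 fun j hj ↦ (hs.lt i₀ j ?_ y hy).le⟩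
    exact (ne_of_mem_erase hj).symm

theorem IsSlack.card_completions_facet [Fintype I] [Fintype R] (hu : ∀ i, (u i).Injective)
    (hs : IsSlack u s) (hsinj : s.Injective) (i₀ : I) :
    #(completions u ((univ.erase i₀).image s)) = 1 := by
  set τ := (univ.erase i₀).image s with hτ
  have hsτ : ∀ i ≠ i₀, s i ∈ τ := fun i hi ↦ mem_image_of_mem s (mem_erase.2 ⟨hi, mem_univ i⟩)
  have hs₀ : s i₀ ∉ τ := by simp [hτ, hsinj.eq_iff]
  obtain ⟨x, hxτ, hmax⟩ := exists_max_image τᶜ (u i₀) ⟨s i₀, mem_compl.2 hs₀⟩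
  rw [mem_compl] at hxτ
  refine card_eq_one.2 ⟨x, eq_singleton_iff_unique_mem.2 ?_⟩
  simp only [completions, mem_filter_univ]
  refine ⟨⟨hxτ, fun y ↦ ?_⟩, fun z ⟨hzτ, hz⟩ ↦ ?_⟩
  · by_cases hy : y ∈ τ
    · obtain ⟨j, -, rfl⟩ := mem_image.1 hy
      exact ⟨j, fun x _ ↦ hs.le j x⟩
    refine ⟨i₀, (forall_mem_insert _ _ _).2
      ⟨hmax y (mem_compl.2 hy), forall_mem_image.2 fun j hj ↦ ?_⟩⟩
    by_cases hys : y ∈ Set.range s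
    · obtain ⟨i, rfl⟩ := hys
      obtain rfl : i = i₀ := by_contra fun hi ↦ hy (hsτ i hi)
      exact hs.le i _
    · exact (hs.lt i₀ j (ne_of_mem_erase hj).symm y hys).le
  · obtain ⟨i, hi⟩ := hz x
    obtain rfl : i = i₀ := by
      by_contra hne
      have hxi : x = s i :=
        hu i ((hi _ (mem_insert_of_mem (hsτ i hne))).antisymm (hs.le i x))
      exact hxτ (hxi ▸ hsτ i hne)
    exact hu i ((hmax z (mem_compl.2 hzτ)).antisymm (hi z (mem_insert_self z τ)))

/-- The dominating sets with one element less than there are colors which use each color but `i₀`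
once: the doors of the double counting argument. -/
noncomputable def doors [Fintype I] [Fintype R] (u : I → R → α) (c : R → I) (i₀ : I) :
    Finset (Finset R) :=
  {τ | #τ + 1 = Fintype.card I ∧ IsDominating u τ ∧ τ.image c = univ.erase i₀}

theorem even_sum_card_completions [Fintype I] [Fintype R] {c : R → I}
    (hc : ∀ σ, IsDominating u σ → σ.image c ≠ univ) (i₀ : I) :
    Even (∑ τ ∈ doors u c i₀, #(completions u τ)) := by
  let rooms : Finset (Finset R) := {σ | #σ = Fintype.card I ∧ IsDominating u σ}
  have hcompletions : ∀ τ ∈ doors u c i₀, completions u τ = ({x | x ∉ τ ∧ insert x τ ∈ rooms} :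
      Finset R) := by
    intro τ hτ
    obtain ⟨hcard, -⟩ := mem_filter_univ _ |>.1 hτ
    refine filter_congr fun x _ ↦ and_congr_right fun hx ↦ ?_
    simp [rooms, card_insert_of_notMem hx, hcard]
  have hfacets : ∀ σ ∈ rooms, ({x ∈ σ | σ.erase x ∈ doors u c i₀} : Finset R) =
      {x ∈ σ | (σ.erase x).image c = univ.erase i₀} := by
    intro σ hσ
    obtain ⟨hcard, hdom⟩ := mem_filter_univ _ |>.1 hσ
    refine filter_congr fun x hx ↦ ?_
    simp [doors, card_erase_add_one hx, hcard, hdom.mono (erase_subset x σ)]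
  rw [sum_congr rfl fun τ hτ ↦ congrArg card (hcompletions τ hτ),
    sum_card_insert_mem_eq_sum_card_erase_mem]
  refine even_sum _ fun σ hσ ↦ ?_
  rw [hfacets σ hσ]
  obtain ⟨hcard, hdom⟩ := mem_filter_univ _ |>.1 hσ
  exact even_card_filter_image_erase hcard (hc σ hdom) i₀

theorem IsSlack.even_card_completions [Fintype I] [Fintype R] (hu : ∀ i, (u i).Injective)
    (hs : IsSlack u s) {c : R → I} (hcs : c.LeftInverse s) {i₀ : I} (hτ : τ ∈ doors u c i₀)
    (hne : τ ≠ (univ.erase i₀).image s) : Even #(completions u τ) := by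
  obtain ⟨hcard, hdom, himage⟩ := mem_filter_univ _ |>.1 hτ
  obtain ⟨t, ht, hts⟩ : ∃ t ∈ τ, t ∉ Set.range s := by
    by_contra! h
    refine hne ?_
    rw [← himage, image_image]
    refine image_id.symm.trans (image_congr fun t ht ↦ ?_)
    obtain ⟨j, rfl⟩ := h t ht
    simp [hcs j]
  obtain ⟨m, hm⟩ := exists_isArgmin u ⟨t, ht⟩
  rw [card_completions_eq_two hu hcard hdom hm fun k ↦ ⟨s k, hs.mem_replacements hm ht hts k⟩]
  exact even_two

/-- Scarf's lemma: the facet of slack elements is the only door with an odd number of completions,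
which contradicts the even total if no dominating set uses all colors. -/
theorem IsSlack.exists_isDominating_forall_exists_mem_eq [Finite R] [Finite I] [Nonempty I]
    (hu : ∀ i, (u i).Injective) (hs : IsSlack u s) {c : R → I} (hcs : c.LeftInverse s) :
    ∃ σ, IsDominating u σ ∧ ∀ i, ∃ x ∈ σ, c x = i := by
  cases nonempty_fintype R
  cases nonempty_fintype I
  by_contra! hcon
  have hc : ∀ σ, IsDominating u σ → σ.image c ≠ univ := fun σ hσ himage ↦ by
    obtain ⟨i, hi⟩ := hcon σ hσ
    obtain ⟨x, hx, hxi⟩ := mem_image.1 (himage.ge (mem_univ i))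
    exact hi x hx hxi
  obtain ⟨i₀⟩ := ‹Nonempty I›
  set τ₀ := (univ.erase i₀).image s
  have hτ₀ : τ₀ ∈ doors u c i₀ := by
    refine mem_filter_univ _ |>.2 ⟨?_, hs.isDominating_facet i₀, ?_⟩
    · rw [card_image_of_injective _ hcs.injective, card_erase_add_one (mem_univ i₀), card_univ]
    · rw [image_image, hcs.comp_eq_id, image_id]
  have heven := even_sum_card_completions hc i₀
  rw [← add_sum_erase _ _ hτ₀, hs.card_completions_facet hu hcs.injective, Nat.even_add] at heven
  refine Nat.not_even_one (heven.2 (even_sum _ fun τ hτ ↦ ?_))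
  obtain ⟨hne, hτ⟩ := mem_erase.1 hτ
  exact hs.even_card_completions hu hcs hτ hne

end Dominating

section ColoredScarf

variable {I R α : Type*}

/-- The functions `v i` extended to slack elements `j : I`: in the `i`-th order the slack `i` lies
below `R` and all others lie above it. Ties between elements of `R` are broken by an order
on `R`. -/
noncomputable def slackExtension (v : I → R → α) (i : I) :
    R ⊕ I → WithBot ((α ×ₗ R) ⊕ₗ I)
  | .inl x => ↑(Sum.inlₗ (toLex (v i x, x)) : (α ×ₗ R) ⊕ₗ I)
  | .inr j => if j = i then ⊥ else ↑(Sum.inrₗ j : (α ×ₗ R) ⊕ₗ I)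

variable (v : I → R → α)

theorem slackExtension_injective (i : I) : (slackExtension v i).Injective := by
  rintro (x | j) (y | k) h <;> simp only [slackExtension] at h <;> (try split_ifs at h) <;>
    simp_all

variable [LinearOrder α] [LinearOrder I] [LinearOrder R]

theorem le_of_slackExtension_inl_le {v : I → R → α} {i : I} {x y : R}
    (h : slackExtension v i (.inl x) ≤ slackExtension v i (.inl y)) : v i x ≤ v i y := by
  rw [slackExtension, slackExtension, WithBot.coe_le_coe, Sum.Lex.inl_le_inl_iff] at h
  exact Prod.Lex.monotone_fst _ _ h

theorem isSlack_slackExtension : IsSlack (slackExtension v) Sum.inr where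
  le i y := by simp [slackExtension]
  lt i j hij := by
    rintro (x | k) hy
    · simp [slackExtension, hij.symm]
    · exact absurd ⟨k, rfl⟩ hy

end ColoredScarf

/-- If `i` is the order in which `y` is dominated, then the slack `i`, lying below `y`, is not in
the dominating set given by Scarf's lemma, so the color `i` is used by an element of `R`. -/
theorem exists_finset_forall_exists_mem_color_le {I R α : Type*} [Finite I] [Finite R]
    [LinearOrder α] (v : I → R → α) (c : R → I) :
    ∃ σ : Finset R, ∀ y, ∃ z ∈ σ, ∀ x ∈ σ, v (c z) y ≤ v (c z) x := by
  rcases isEmpty_or_nonempty R with _ | hR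
  · exact ⟨∅, isEmptyElim⟩
  have : Nonempty I := hR.map c
  let : LinearOrder I := linearOrderOfSTO WellOrderingRel
  let : LinearOrder R := linearOrderOfSTO WellOrderingRel
  obtain ⟨σ, hσ, hcolor⟩ := (isSlack_slackExtension v).exists_isDominating_forall_exists_mem_eq
    (slackExtension_injective v) (c := Sum.elim c id) fun _ ↦ rfl
  refine ⟨σ.toLeft, fun y ↦ ?_⟩
  obtain ⟨i, hi⟩ := hσ (.inl y)
  obtain ⟨z | j, hz, rfl⟩ := hcolor i
  · exact ⟨z, mem_toLeft.2 hz, fun x hx ↦ le_of_slackExtension_inl_le (hi _ (mem_toLeft.1 hx))⟩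
  · simpa [slackExtension] using hi _ hz

section Simplex

variable {I : Type*} [Fintype I]

theorem exists_stdSimplex_forall_le [Nonempty I] {b : I → ℝ} (hb : ∀ i, 0 ≤ b i)
    (hsum : ∑ i, b i ≤ 1) : ∃ x : stdSimplex ℝ I, ∀ i, b i ≤ x i := by
  obtain ⟨i₀⟩ := ‹Nonempty I›
  have hle : b ≤ b + Pi.single i₀ (1 - ∑ i, b i) :=
    le_add_of_nonneg_right (Pi.single_nonneg.2 (sub_nonneg.2 hsum))
  exact ⟨⟨_, fun i ↦ (hb i).trans (hle i), by simp [sum_add_distrib]⟩, hle⟩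

theorem exists_stdSimplex_apply_eq_zero_dist_le (x : stdSimplex ℝ I) {i j : I} (hij : i ≠ j) :
    ∃ y : stdSimplex ℝ I, y i = 0 ∧ dist x y ≤ x i := by
  have hx := stdSimplex.zero_le x
  let y : I → ℝ := ⇑x + (Pi.single j (x i) - Pi.single i (x i))
  have hyi : y i = 0 := by simp [y, hij]
  have hy : ∀ k, 0 ≤ y k := fun k ↦ by
    by_cases hk : k = i
    · rw [hk, hyi]
    · have hj : 0 ≤ (Pi.single j (x i) : I → ℝ) := Pi.single_nonneg.2 (hx i)
      simpa [y, hk] using add_nonneg (hx k) (hj k)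
  refine ⟨⟨y, hy, by simp [y, sum_add_distrib]⟩, hyi, (dist_pi_le_iff (hx i)).2 fun k ↦ ?_⟩
  change dist (x k) (y k) ≤ x i
  simp only [y, Pi.add_apply, dist_self_add_right, Pi.sub_apply, Pi.single_apply]
  split_ifs <;> simp_all [abs_of_nonneg]

theorem one_lt_sum_add_of_dense [Nonempty I] {δ : ℝ} {R : Set (stdSimplex ℝ I)}
    (hR : ∀ x, ∃ y ∈ R, dist x y < δ) {a : I → ℝ} (ha : ∀ i, 0 ≤ a i)
    (hRa : ∀ y ∈ R, ∃ i, y i ≤ a i) : 1 < ∑ i, (a i + δ) := by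
  by_contra! hsum
  have hδ : 0 ≤ δ := by
    obtain ⟨y, -, hy⟩ := hR (Classical.arbitrary _)
    exact dist_nonneg.trans hy.le
  obtain ⟨x, hx⟩ := exists_stdSimplex_forall_le (fun i ↦ add_nonneg (ha i) hδ) hsum
  obtain ⟨y, hyR, hxy⟩ := hR x
  obtain ⟨i, hi⟩ := hRa y hyR
  have : x i - y i < δ :=
    (le_abs_self _).trans_lt ((dist_le_pi_dist (x : I → ℝ) y i).trans_lt hxy)
  linarith [hx i]

theorem stdSimplex_apply_sub_le {a : I → ℝ} {x : stdSimplex ℝ I} (hax : ∀ i, a i ≤ x i) (i : I) :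
    x i - a i ≤ 1 - ∑ j, a j := by
  rw [← stdSimplex.sum_eq_one x, ← sum_sub_distrib]
  exact single_le_sum (f := fun j ↦ x j - a j) (fun j _ ↦ sub_nonneg.2 (hax j)) (mem_univ i)

/-- The corner `a` is the componentwise minimum of `σ`, lowered to `0` at the unused colors: it
dominates the net, so its coordinates sum up to almost `1`. -/
theorem exists_forall_le_and_lt_add_of_dense [Nonempty I] {δ : ℝ} {R : Set (stdSimplex ℝ I)}
    (hR : ∀ x, ∃ y ∈ R, dist x y < δ) {c : R → I} {σ : Finset R} (hne : σ.Nonempty)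
    (hσ : ∀ y : R, ∃ z ∈ σ, ∀ x ∈ σ, y.1 (c z) ≤ x.1 (c z)) :
    ∃ a : I → ℝ, (∀ i ∉ σ.image c, a i = 0) ∧
      ∀ x ∈ σ, ∀ i, a i ≤ x.1 i ∧ x.1 i < a i + Fintype.card I * δ := by
  let a : I → ℝ := fun i ↦ if i ∈ σ.image c then σ.inf' hne fun x ↦ x.1 i else 0
  have ha : ∀ i, 0 ≤ a i := fun i ↦ by
    dsimp only [a]
    split_ifs
    · exact le_inf' _ _ fun x _ ↦ stdSimplex.zero_le x.1 i
    · exact le_rfl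
  have hax : ∀ x ∈ σ, ∀ i, a i ≤ x.1 i := fun x hx i ↦ by
    dsimp only [a]
    split_ifs
    · exact inf'_le _ hx
    · exact stdSimplex.zero_le x.1 i
  have hsum : 1 < ∑ i, (a i + δ) := by
    refine one_lt_sum_add_of_dense hR ha fun y hy ↦ ?_
    obtain ⟨z, hz, hzy⟩ := hσ ⟨y, hy⟩
    refine ⟨c z, ?_⟩
    simp only [a, if_pos (mem_image_of_mem _ hz)]
    exact le_inf' _ _ hzy
  refine ⟨a, fun i hi ↦ if_neg hi, fun x hx i ↦ ⟨hax x hx i, ?_⟩⟩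
  rw [sum_add_distrib, sum_const, card_univ, nsmul_eq_mul] at hsum
  linarith [stdSimplex_apply_sub_le (hax x hx) i]

theorem exists_small_set_of_coloring [Nonempty I] (c : stdSimplex ℝ I → I) {ε : ℝ} (hε : 0 < ε) :
    ∃ s : Set (stdSimplex ℝ I), s.Nonempty ∧ (∀ x ∈ s, ∀ y ∈ s, dist x y < ε) ∧
      ∀ i ∉ c '' s, ∀ x ∈ s, x i < ε := by
  obtain ⟨δ, hδ, hδε⟩ : ∃ δ > 0, Fintype.card I * δ = ε :=
    ⟨ε / Fintype.card I, by positivity, by field_simp⟩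
  obtain ⟨R, -, hRfin, hR⟩ := (isCompact_univ (X := stdSimplex ℝ I)).finite_cover_balls hδ
  have hRdense : ∀ x, ∃ y ∈ R, dist x y < δ := fun x ↦ by simpa using hR (Set.mem_univ x)
  have := hRfin.to_subtype
  obtain ⟨σ, hσ⟩ := exists_finset_forall_exists_mem_color_le (fun i (x : R) ↦ x.1 i) fun x ↦ c x
  have hne : σ.Nonempty := by
    obtain ⟨y, hy, -⟩ := hRdense (Classical.arbitrary _)
    obtain ⟨x, hx, -⟩ := hσ ⟨y, hy⟩
    exact ⟨x, hx⟩
  obtain ⟨a, ha, hσa⟩ := exists_forall_le_and_lt_add_of_dense hRdense hne hσ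
  rw [hδε] at hσa
  have hlt : ∀ x ∈ σ, ∀ y ∈ σ, ∀ i, x.1 i - y.1 i < ε := fun x hx y hy i ↦ by
    linarith [(hσa x hx i).2, (hσa y hy i).1]
  refine ⟨(↑) '' (σ : Set R), hne.to_set.image _, ?_, ?_⟩
  · rintro _ ⟨x, hx, rfl⟩ _ ⟨y, hy, rfl⟩
    exact (dist_pi_lt_iff hε).2 fun i ↦ abs_sub_lt_iff.2 ⟨hlt x hx y hy i, hlt y hy x hx i⟩
  · rintro i hi _ ⟨x, hx, rfl⟩
    linarith [(hσa x hx i).2, ha i (by simpa using hi)]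

variable {F : I → Set (stdSimplex ℝ I)}

theorem exists_forall_exists_mem_dist_lt [Nonempty I] (hcover : ⋃ i, F i = Set.univ)
    (hfacet : ∀ x i, x i = 0 → x ∈ F i) {ε : ℝ} (hε : 0 < ε) :
    ∃ x, ∀ i, ∃ y ∈ F i, dist x y < ε := by
  choose c hc using fun x ↦ Set.mem_iUnion.1 (hcover.symm ▸ Set.mem_univ x)
  obtain ⟨s, ⟨x, hx⟩, hdist, hsmall⟩ := exists_small_set_of_coloring c hε
  refine ⟨x, fun i ↦ ?_⟩
  by_cases hi : i ∈ c '' s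
  · obtain ⟨y, hy, rfl⟩ := hi
    exact ⟨y, hc y, hdist x hx y hy⟩
  · have hne : i ≠ c x := fun h ↦ hi ⟨x, hx, h.symm⟩
    obtain ⟨y, hyi, hxy⟩ := exists_stdSimplex_apply_eq_zero_dist_le x hne
    exact ⟨y, hfacet y i hyi, hxy.trans_lt (hsmall i hi x hx)⟩

theorem nonempty_iInter_of_isClosed_of_facet_subset [Nonempty I] (hclosed : ∀ i, IsClosed (F i))
    (hcover : ⋃ i, F i = Set.univ) (hfacet : ∀ x i, x i = 0 → x ∈ F i) :
    (⋂ i, F i).Nonempty := by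
  by_contra! hempty
  obtain ⟨ε, hε, hball⟩ := lebesgue_number_lemma_of_metric isCompact_univ
    (fun i ↦ (hclosed i).isOpen_compl) (by rw [← Set.compl_iInter, hempty, Set.compl_empty])
  obtain ⟨x, hx⟩ := exists_forall_exists_mem_dist_lt hcover hfacet hε
  obtain ⟨i, hi⟩ := hball x (Set.mem_univ x)
  obtain ⟨y, hyF, hxy⟩ := hx i
  exact hi (Metric.mem_ball'.2 hxy) hyF

theorem surjective_of_continuous_of_apply_eq_zero {g : stdSimplex ℝ I → stdSimplex ℝ I}
    (hg : Continuous g) (hface : ∀ x i, x i = 0 → g x i = 0) : g.Surjective := by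
  intro y
  have : Nonempty I := by
    by_contra! h
    simpa using stdSimplex.sum_eq_one y
  obtain ⟨x, hx⟩ : (⋂ i, {x | g x i ≤ y i}).Nonempty := by
    refine nonempty_iInter_of_isClosed_of_facet_subset (fun i ↦ ?_) ?_ fun x i hxi ↦ ?_
    · exact isClosed_le ((continuous_apply i).comp (continuous_subtype_val.comp hg))
        continuous_const
    · refine Set.eq_univ_of_forall fun x ↦ Set.mem_iUnion.2 ?_
      obtain ⟨i, -, hi⟩ := exists_le_of_sum_le (f := g x) (g := y) univ_nonempty (by simp)
      exact ⟨i, hi⟩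
    · exact (hface x i hxi).le.trans (stdSimplex.zero_le y i)
  have hle : ∀ i ∈ univ, g x i ≤ y i := fun i _ ↦ Set.mem_iInter.1 hx i
  exact ⟨x, stdSimplex.ext (funext fun i ↦ (sum_eq_sum_iff_of_le hle).1 (by simp) i (mem_univ i))⟩

end Simplex

section Realization

variable {V N : Type*} [Fintype V]

theorem realization_subset_stdSimplex (K : Finset (Finset V)) : realization K ⊆ stdSimplex ℝ V :=
  fun _ hk ↦ ⟨hk.1, hk.2.1⟩

theorem stdSimplex_subset_realization_univ : stdSimplex ℝ V ⊆ realization univ :=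
  fun _ hk ↦ ⟨hk.1, hk.2, mem_univ _⟩

theorem spt_stdSimplex_map [Fintype N] [DecidableEq N] (c₀ : V → N) (k : stdSimplex ℝ V) :
    spt (stdSimplex.map c₀ k : N → ℝ) = (spt (k : V → ℝ)).image c₀ := by
  ext n
  have hmap : 0 < stdSimplex.map c₀ k n ↔ ∃ v, c₀ v = n ∧ 0 < k v := by
    rw [stdSimplex.map_coe, FunOnFinite.linearMap_apply_apply,
      sum_pos_iff_of_nonneg fun v _ ↦ stdSimplex.zero_le k v]
    simp
  simp only [spt, mem_filter_univ, mem_image, hmap, and_comm]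

end Realization

theorem sperner_lemma_general {V N : Type*} [Fintype V] [Fintype N] [DecidableEq N] [Nonempty N]
    {K : Finset (Finset V)} {g : realization (univ : Finset (Finset N)) → realization K}
    (hg : Continuous g) {c₀ : V → N}
    (hc : ∀ x, (spt (g x : V → ℝ)).image c₀ ⊆ spt (x : N → ℝ)) :
    ∃ σ ∈ K, σ.image c₀ = univ := by
  let g' : stdSimplex ℝ N → stdSimplex ℝ V := Set.inclusion (realization_subset_stdSimplex K) ∘ g ∘
    Set.inclusion stdSimplex_subset_realization_univ
  have hg' : Continuous g' :=
    (continuous_inclusion _).comp (hg.comp (continuous_inclusion _))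
  have hspt : ∀ x, spt (stdSimplex.map c₀ (g' x) : N → ℝ) ⊆ spt (x : N → ℝ) := fun x ↦ by
    rw [spt_stdSimplex_map]; exact hc _
  have hsurj : (stdSimplex.map c₀ ∘ g').Surjective := by
    refine surjective_of_continuous_of_apply_eq_zero ((stdSimplex.continuous_map c₀).comp hg')
      fun x n hxn ↦ ?_
    by_contra hne
    have hpos : n ∈ spt (stdSimplex.map c₀ (g' x) : N → ℝ) :=
      mem_filter_univ _ |>.2 ((stdSimplex.zero_le _ n).lt_of_ne' hne)
    exact (mem_filter_univ _ |>.1 (hspt x hpos)).ne' hxn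
  obtain ⟨x, hx⟩ := hsurj stdSimplex.barycenter
  refine ⟨spt (g' x : V → ℝ), (g _).2.2.2, ?_⟩
  rw [← spt_stdSimplex_map, ← Function.comp_apply (f := stdSimplex.map c₀), hx]
  exact filter_true_of_mem fun _ _ ↦ inv_pos.2 (Nat.cast_pos.2 Fintype.card_pos)

/-- Sperner's lemma (the case `|I| = 1` of the multicolored theorem): if `f : K → PN` is a
subdivision and `c` is a Sperner coloring of `f`, then some face `σ ∈ K` uses all the
colors: `c σ = N`. -/
theorem sperner_lemma {V N : Type*} [Fintype V] [Fintype N] [DecidableEq N] [Nonempty N]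
    (K : Finset (Finset V)) (hK : IsComplex K)
    (f : Finset V → Finset N)
    (hf : IsSubdivision K (Finset.univ : Finset (Finset N)) f)
    (c : Finset V → Finset N)
    (hc : IsSpernerColoring K (Finset.univ : Finset (Finset N)) f c) :
    ∃ σ ∈ K, c σ = (Finset.univ : Finset N) := by
  obtain ⟨⟨-, h, hh⟩, ⟨c₀, hc₀⟩, -, hcf⟩ := And.intro hf hc
  simpa only [hc₀] using sperner_lemma_general h.symm.continuous fun x ↦ by
    rw [← hc₀]; simpa [← hh] using hcf _ (h.symm x).2.2.2
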